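/- Let f : ℝ^D × ℝ^{d'} → ℝ be ℓ-Lipschitz smooth, and for α > 0 define the partially smoothed function f_α(x, y) := E_v[f(x + αv, y)], where v is uniformly distributed on the closed Euclidean ball of radius √D centered at the origin in ℝ^D. Fix x ∈ ℝ^D, suppose y ↦ f(x, y) has a unique maximizer y*(x), set g(x) := f(x, y*(x)), and assume g is differentiable at x with ∇g(x) = ∇_x f(x, y*(x)). Then for all ζ > 0, γ > 0 and y ∈ ℝ^{d'}: −ζ·⟨∇g(x), ∇_x f_α(x, y)⟩ ≤ α²ℓD³/(4γ) + (ℓ/γ)·‖y*(x) − y‖² + (ζ²ℓγ/2 − ζ)·‖∇_x f_α(x, y)‖². -/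

import Mathlib

open MeasureTheory Metric RealInnerProductSpace

/-- The uniform probability measure on the closed Euclidean ball of radius `√D`
centered at the origin in `ℝ^D`. -/
noncomputable def uniformBall (D : ℕ) : Measure (EuclideanSpace ℝ (Fin D)) :=
  (volume (closedBall (0 : EuclideanSpace ℝ (Fin D)) (Real.sqrt D)))⁻¹ •
    volume.restrict (closedBall (0 : EuclideanSpace ℝ (Fin D)) (Real.sqrt D))

/-- `ℝ^D × ℝ^{d'}` with the Euclidean (`L²`) product norm. -/
abbrev EuclideanProd (D d' : ℕ) :=
  WithLp 2 (EuclideanSpace ℝ (Fin D) × EuclideanSpace ℝ (Fin d'))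

/-- The point of `ℝ^D × ℝ^{d'}` (with the Euclidean product norm) with components `x, y`. -/
noncomputable def euclidPair {D d' : ℕ} (x : EuclideanSpace ℝ (Fin D))
    (y : EuclideanSpace ℝ (Fin d')) : EuclideanProd D d' :=
  (WithLp.equiv 2 (EuclideanSpace ℝ (Fin D) × EuclideanSpace ℝ (Fin d'))).symm (x, y)

lemma ub_vol_ne_zero (D : ℕ) (hD : 0 < D) :
    volume (closedBall (0 : EuclideanSpace ℝ (Fin D)) (Real.sqrt D)) ≠ 0 :=
  (measure_closedBall_pos _ _ (Real.sqrt_pos.2 (by exact_mod_cast hD))).ne'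

lemma ub_prob (D : ℕ) (hD : 0 < D) : IsProbabilityMeasure (uniformBall D) := by
  constructor
  simp only [uniformBall, Measure.smul_apply, Measure.restrict_apply_univ, smul_eq_mul]
  exact ENNReal.inv_mul_cancel (ub_vol_ne_zero D hD) measure_closedBall_lt_top.ne

lemma ub_integrable (D : ℕ) (hD : 0 < D) {F : Type*} [NormedAddCommGroup F]
    {h : EuclideanSpace ℝ (Fin D) → F} (hh : Continuous h) : Integrable h (uniformBall D) := by
  unfold uniformBall
  apply Integrable.smul_measure
  · exact hh.continuousOn.integrableOn_compact (isCompact_closedBall _ _)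
  · exact ENNReal.inv_ne_top.2 (ub_vol_ne_zero D hD)

lemma ub_ae (D : ℕ) : ∀ᵐ v ∂(uniformBall D), ‖v‖ ≤ Real.sqrt D := by
  unfold uniformBall
  apply Measure.ae_smul_measure
  filter_upwards [ae_restrict_mem measurableSet_closedBall] with v hv
  simpa using hv

lemma ub_moment (D : ℕ) (hD : 0 < D) :
    ∫ v, ‖v‖ ∂(uniformBall D) = Real.sqrt D * D / (D + 1) := by
  haveI : Nonempty (Fin D) := ⟨⟨0, hD⟩⟩
  have hs : 0 < Real.sqrt D := Real.sqrt_pos.2 (by exact_mod_cast hD)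
  have hV : 0 < (volume : Measure (EuclideanSpace ℝ (Fin D))).real (ball 0 1) :=
    ENNReal.toReal_pos (measure_ball_pos _ _ one_pos).ne' measure_ball_lt_top.ne
  have h1 : ∫ v in closedBall (0 : EuclideanSpace ℝ (Fin D)) (Real.sqrt D), ‖v‖
      = D * (volume.real (ball (0 : EuclideanSpace ℝ (Fin D)) 1) *
        (Real.sqrt D ^ (D + 1) / (D + 1))) := by
    rw [← integral_indicator measurableSet_closedBall]
    have h2 := integral_fun_norm_addHaar (volume : Measure (EuclideanSpace ℝ (Fin D)))
      ((Set.Iic (Real.sqrt D)).indicator (fun r : ℝ => r))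
    have h3 : (fun v : EuclideanSpace ℝ (Fin D) =>
        (Set.Iic (Real.sqrt D)).indicator (fun r : ℝ => r) ‖v‖) =
        (closedBall (0 : EuclideanSpace ℝ (Fin D)) (Real.sqrt D)).indicator (fun v => ‖v‖) := by
      ext v
      simp [Set.indicator]
    rw [h3] at h2
    rw [h2, finrank_euclideanSpace_fin, nsmul_eq_mul, smul_eq_mul]
    congr 2
    have h4 : (fun y : ℝ => y ^ (D - 1) • (Set.Iic (Real.sqrt D)).indicator (fun r : ℝ => r) y)
        = (Set.Iic (Real.sqrt D)).indicator (fun y => y ^ D) := by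
      ext y
      by_cases hy : y ≤ Real.sqrt D
      · simp only [Set.indicator, Set.mem_Iic, hy, if_true, smul_eq_mul]
        rw [← pow_succ, Nat.sub_add_cancel hD]
      · simp [Set.indicator, hy]
    rw [h4, setIntegral_indicator measurableSet_Iic, Set.Ioi_inter_Iic,
      ← intervalIntegral.integral_of_le hs.le, integral_pow]
    simp
  unfold uniformBall
  rw [integral_smul_measure, h1, ENNReal.toReal_inv]
  have h5 := Measure.addHaar_real_closedBall (volume : Measure (EuclideanSpace ℝ (Fin D))) 0 hs.le
  rw [measureReal_def] at h5
  rw [h5, finrank_euclideanSpace_fin, smul_eq_mul]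
  field_simp
  ring

noncomputable def inlE (D d' : ℕ) : EuclideanSpace ℝ (Fin D) →L[ℝ] EuclideanProd D d' :=
  (WithLp.prodContinuousLinearEquiv 2 ℝ _ _).symm.toContinuousLinearMap.comp
    (ContinuousLinearMap.inl ℝ _ _)

lemma norm_inlE_le (D d' : ℕ) : ‖inlE D d'‖ ≤ 1 := by
  refine ContinuousLinearMap.opNorm_le_bound _ zero_le_one fun x => ?_
  simp [inlE, WithLp.prod_norm_eq_of_L2]

lemma euclidPair_eq {D d' : ℕ} (x : EuclideanSpace ℝ (Fin D))
    (y : EuclideanSpace ℝ (Fin d')) : euclidPair x y = inlE D d' x + euclidPair 0 y := by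
  simp [euclidPair, inlE, ← WithLp.toLp_add]

lemma euclidPair_sub_le {D d' : ℕ} (x x' : EuclideanSpace ℝ (Fin D))
    (y y' : EuclideanSpace ℝ (Fin d')) :
    ‖euclidPair x y - euclidPair x' y'‖ ≤ ‖x - x'‖ + ‖y - y'‖ := by
  rw [WithLp.prod_norm_eq_of_L2]
  apply Real.sqrt_le_iff.2
  refine ⟨by positivity, ?_⟩
  simp only [euclidPair, WithLp.equiv_symm_apply, WithLp.sub_fst, WithLp.sub_snd]
  change ‖x - x'‖ ^ 2 + ‖y - y'‖ ^ 2 ≤ _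
  nlinarith [norm_nonneg (x-x'), norm_nonneg (y-y'), mul_nonneg (norm_nonneg (x-x')) (norm_nonneg (y-y'))]

lemma hasFDerivAt_pair {D d' : ℕ} {f : EuclideanProd D d' → ℝ} (hdiff : Differentiable ℝ f)
    (x c : EuclideanSpace ℝ (Fin D)) (y : EuclideanSpace ℝ (Fin d')) :
    HasFDerivAt (fun x' => f (euclidPair (x' + c) y))
      ((fderiv ℝ f (euclidPair (x + c) y)).comp (inlE D d')) x := by
  have h1 : HasFDerivAt (fun x' : EuclideanSpace ℝ (Fin D) => euclidPair (x' + c) y)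
      (inlE D d') x := by
    have : (fun x' : EuclideanSpace ℝ (Fin D) => euclidPair (x' + c) y) =
        fun x' => inlE D d' x' + euclidPair c y := by
      ext1 x'
      rw [euclidPair_eq, euclidPair_eq c, map_add, add_assoc]
    rw [this]
    exact (inlE D d').hasFDerivAt.add_const _
  exact (hdiff _).hasFDerivAt.comp x h1

lemma continuous_pair {D d' : ℕ} (y : EuclideanSpace ℝ (Fin d')) :
    Continuous (fun x : EuclideanSpace ℝ (Fin D) => euclidPair x y) := by
  have : (fun x : EuclideanSpace ℝ (Fin D) => euclidPair x y) =
      fun x => inlE D d' x + euclidPair 0 y := funext fun x => euclidPair_eq x y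
  rw [this]
  exact (inlE D d').continuous.add continuous_const

lemma cont_comp_aux {X E F : Type*} [TopologicalSpace X] [NormedAddCommGroup E] [NormedSpace ℝ E]
    [NormedAddCommGroup F] [NormedSpace ℝ F] (L : E →L[ℝ] F) {A : X → F →L[ℝ] ℝ}
    (hA : Continuous A) : Continuous (fun v => (A v).comp L) :=
  hA.clm_comp continuous_const

lemma diff_cont_aux {E : Type*} [NormedAddCommGroup E] [NormedSpace ℝ E] {f : E → ℝ}
    (hf : Differentiable ℝ f) : Continuous f := hf.continuous

set_option maxHeartbeats 1600000 in
lemma main_bound {D d' : ℕ} (hD : 0 < D) {ℓ α : ℝ} (hℓ : 0 < ℓ) (hα : 0 < α)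
    {f : EuclideanProd D d' → ℝ} (hdiff : Differentiable ℝ f)
    (hlip : ∀ z₁ z₂, ‖gradient f z₁ - gradient f z₂‖ ≤ ℓ * ‖z₁ - z₂‖)
    (x : EuclideanSpace ℝ (Fin D)) (y ys : EuclideanSpace ℝ (Fin d')) :
    ‖gradient (fun x' => f (euclidPair x' ys)) x -
      gradient (fun x' => ∫ v, f (euclidPair (x' + α • v) y) ∂(uniformBall D)) x‖ ≤
      ℓ * (α * (Real.sqrt D * D / 2) + ‖ys - y‖) := by
  haveI := ub_prob D hD
  have hlip' : ∀ z₁ z₂, ‖fderiv ℝ f z₁ - fderiv ℝ f z₂‖ ≤ ℓ * ‖z₁ - z₂‖ := by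
    intro z₁ z₂
    have := hlip z₁ z₂
    rwa [gradient, gradient, ← map_sub, LinearIsometryEquiv.norm_map] at this
  have hcont : Continuous (fderiv ℝ f) := by
    have : LipschitzWith ⟨ℓ, hℓ.le⟩ (fderiv ℝ f) :=
      LipschitzWith.of_dist_le_mul fun a b => by
        rw [dist_eq_norm, dist_eq_norm]; exact hlip' a b
    exact this.continuous
  have hd : ∀ x₁ x₂ y₁ y₂, ‖(fderiv ℝ f (euclidPair x₁ y₁)).comp (inlE D d') -
      (fderiv ℝ f (euclidPair x₂ y₂)).comp (inlE D d')‖ ≤ ℓ * (‖x₁ - x₂‖ + ‖y₁ - y₂‖) := by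
    intro x₁ x₂ y₁ y₂
    rw [← ContinuousLinearMap.sub_comp]
    calc _ ≤ ‖fderiv ℝ f (euclidPair x₁ y₁) - fderiv ℝ f (euclidPair x₂ y₂)‖ * ‖inlE D d'‖ :=
          ContinuousLinearMap.opNorm_comp_le _ _
      _ ≤ ‖fderiv ℝ f (euclidPair x₁ y₁) - fderiv ℝ f (euclidPair x₂ y₂)‖ * 1 := by
          gcongr; exact norm_inlE_le D d'
      _ ≤ ℓ * ‖euclidPair x₁ y₁ - euclidPair x₂ y₂‖ := by rw [mul_one]; exact hlip' _ _
      _ ≤ _ := by gcongr; exact euclidPair_sub_le _ _ _ _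
  have hpc : ∀ x' : EuclideanSpace ℝ (Fin D), Continuous (fun v => euclidPair (x' + α • v) y) :=
    fun x' => (continuous_pair y).comp (by fun_prop)
  have hFc : ∀ x' : EuclideanSpace ℝ (Fin D), Continuous (fun v => f (euclidPair (x' + α • v) y)) :=
    fun x' => (diff_cont_aux hdiff).comp (hpc x')
  have hGc : Continuous (fun v => (fderiv ℝ f (euclidPair (x + α • v) y)).comp (inlE D d')) :=
    cont_comp_aux _ (hcont.comp (hpc x))
  have hderiv : HasFDerivAt (fun x' => ∫ v, f (euclidPair (x' + α • v) y) ∂(uniformBall D))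
      (∫ v, (fderiv ℝ f (euclidPair (x + α • v) y)).comp (inlE D d') ∂(uniformBall D)) x := by
    refine hasFDerivAt_integral_of_dominated_of_fderiv_le (s := ball x 1)
      (F := fun x' v => f (euclidPair (x' + α • v) y))
      (F' := fun x' v => (fderiv ℝ f (euclidPair (x' + α • v) y)).comp (inlE D d'))
      (bound := fun v => ‖(fderiv ℝ f (euclidPair x y)).comp (inlE D d')‖ + ℓ * (1 + α * ‖v‖))
      (ball_mem_nhds x one_pos)
      (Filter.Eventually.of_forall fun x' => (hFc x').aestronglyMeasurable)
      (ub_integrable D hD (hFc x)) hGc.aestronglyMeasurable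
      (Filter.Eventually.of_forall fun v x' hx' => ?_)
      (ub_integrable D hD (by fun_prop))
      (Filter.Eventually.of_forall fun v x' _ => hasFDerivAt_pair hdiff x' (α • v) y)
    have h1 := hd (x' + α • v) x y y
    have h2 := norm_le_norm_add_norm_sub' ((fderiv ℝ f (euclidPair (x' + α • v) y)).comp (inlE D d'))
      ((fderiv ℝ f (euclidPair x y)).comp (inlE D d'))
    have h3 : ‖x' + α • v - x‖ + ‖y - y‖ ≤ 1 + α * ‖v‖ := by
      rw [sub_self, norm_zero, add_zero, add_sub_right_comm]
      refine (norm_add_le _ _).trans ?_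
      rw [norm_smul, Real.norm_of_nonneg hα.le]
      gcongr
      exact (mem_ball_iff_norm.1 hx').le
    have h4 := mul_le_mul_of_nonneg_left h3 hℓ.le
    linarith
  have hu : fderiv ℝ (fun x' => f (euclidPair x' ys)) x =
      (fderiv ℝ f (euclidPair x ys)).comp (inlE D d') := by
    have := hasFDerivAt_pair hdiff x 0 ys
    simp only [add_zero] at this
    exact this.fderiv
  rw [gradient, gradient, ← map_sub, LinearIsometryEquiv.norm_map, hu, hderiv.fderiv]
  have hconst : (fderiv ℝ f (euclidPair x ys)).comp (inlE D d') =
      ∫ v, (fderiv ℝ f (euclidPair x ys)).comp (inlE D d') ∂(uniformBall D) := by simp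
  rw [hconst, ← integral_sub (integrable_const _) (ub_integrable D hD hGc)]
  have hle : ∫ v, ℓ * (α * ‖v‖ + ‖ys - y‖) ∂(uniformBall D) ≤
      ℓ * (α * (Real.sqrt D * D / 2) + ‖ys - y‖) := by
    rw [integral_const_mul, integral_add (ub_integrable D hD (by fun_prop)) (integrable_const _),
      integral_const_mul, ub_moment D hD]
    simp only [integral_const, probReal_univ, one_smul]
    have : (1 : ℝ) ≤ D := by exact_mod_cast hD
    gcongr
    linarith
  refine le_trans (norm_integral_le_of_norm_le (ub_integrable D hD (by fun_prop))
    (Filter.Eventually.of_forall fun v => ?_)) hle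
  have := hd x (x + α • v) ys y
  rwa [sub_add_cancel_left, norm_neg, norm_smul, Real.norm_of_nonneg hα.le] at this


/-- Let `f : ℝ^D × ℝ^{d'} → ℝ` be `ℓ`-Lipschitz smooth, let
`f_α (x, y) = E_v [f (x + α v, y)]` (`v` uniform on the ball of radius `√D` in `ℝ^D`), fix
`x`, suppose `y ↦ f (x, y)` has a unique maximizer `y*(x)`, set `g x = f (x, y*(x))`, and
assume `g` is differentiable at `x` with `∇g(x) = ∇ₓ f (x, y*(x))`.  Then for all
`ζ, γ > 0` and all `y`,
`−ζ ⟪∇g(x), ∇ₓ f_α (x, y)⟫ ≤ α²ℓD³/(4γ) + (ℓ/γ)‖y*(x) − y‖² + (ζ²ℓγ/2 − ζ)‖∇ₓ f_α (x, y)‖²`. -/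
theorem stmt7 (D d' : ℕ) (ℓ α : ℝ) (hℓ : 0 < ℓ) (hα : 0 < α)
    (f : EuclideanProd D d' → ℝ) (hdiff : Differentiable ℝ f)
    (hlip : ∀ z₁ z₂, ‖gradient f z₁ - gradient f z₂‖ ≤ ℓ * ‖z₁ - z₂‖)
    (x : EuclideanSpace ℝ (Fin D)) (ystar : EuclideanSpace ℝ (Fin D) → EuclideanSpace ℝ (Fin d'))
    (hmax : ∀ y, f (euclidPair x y) ≤ f (euclidPair x (ystar x)))
    (huniq : ∀ y', (∀ y, f (euclidPair x y) ≤ f (euclidPair x y')) → y' = ystar x)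
    (hg : HasGradientAt (fun x' => f (euclidPair x' (ystar x')))
      (gradient (fun x' => f (euclidPair x' (ystar x))) x) x) :
    ∀ (ζ γ : ℝ) (y : EuclideanSpace ℝ (Fin d')), 0 < ζ → 0 < γ →
      -ζ * ⟪gradient (fun x' => f (euclidPair x' (ystar x'))) x,
            gradient (fun x' => ∫ v, f (euclidPair (x' + α • v) y) ∂(uniformBall D)) x⟫
        ≤ α ^ 2 * ℓ * (D : ℝ) ^ 3 / (4 * γ) + ℓ / γ * ‖ystar x - y‖ ^ 2
          + (ζ ^ 2 * ℓ * γ / 2 - ζ) *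
            ‖gradient (fun x' => ∫ v, f (euclidPair (x' + α • v) y) ∂(uniformBall D)) x‖ ^ 2 := by
  intro ζ γ y hζ hγ
  rw [hg.gradient]
  rcases Nat.eq_zero_or_pos D with rfl | hD
  · have h0 : ∀ a : EuclideanSpace ℝ (Fin 0), a = 0 := fun a => Subsingleton.elim _ _
    rw [h0 (gradient (fun x' => ∫ v, f (euclidPair (x' + α • v) y) ∂(uniformBall 0)) x)]
    simp only [inner_zero_right, norm_zero]
    have : 0 ≤ ℓ / γ * ‖ystar x - y‖ ^ 2 := by positivity
    simpa using this
  have hb := main_bound hD hℓ hα hdiff hlip x y (ystar x)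
  set u := gradient (fun x' => f (euclidPair x' (ystar x))) x
  set w := gradient (fun x' => ∫ v, f (euclidPair (x' + α • v) y) ∂(uniformBall D)) x
  set a := ‖ystar x - y‖
  have h1 : -ζ * ⟪u, w⟫ = -ζ * ⟪u - w, w⟫ - ζ * ‖w‖ ^ 2 := by
    rw [inner_sub_left, real_inner_self_eq_norm_sq]; ring
  have h2 : -⟪u - w, w⟫ ≤ ‖u - w‖ * ‖w‖ := (neg_le_abs _).trans (abs_real_inner_le_norm _ _)
  have hsq : Real.sqrt D ^ 2 = D := Real.sq_sqrt (Nat.cast_nonneg D)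
  have h3 : ‖u - w‖ ^ 2 ≤ ℓ ^ 2 * (α ^ 2 * (D : ℝ) ^ 3 / 2 + 2 * a ^ 2) := by
    calc ‖u - w‖ ^ 2 ≤ (ℓ * (α * (Real.sqrt D * D / 2) + a)) ^ 2 := by gcongr
      _ = ℓ ^ 2 * (α * (Real.sqrt D * D / 2) + a) ^ 2 := by ring
      _ ≤ ℓ ^ 2 * (2 * (α * (Real.sqrt D * D / 2)) ^ 2 + 2 * a ^ 2) := by
        gcongr
        nlinarith [sq_nonneg (α * (Real.sqrt D * D / 2) - a)]
      _ = ℓ ^ 2 * (α ^ 2 * (Real.sqrt D ^ 2 * (D : ℝ) ^ 2) / 2 + 2 * a ^ 2) := by ring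
      _ = _ := by rw [hsq]; ring
  have h4 : ζ * (‖u - w‖ * ‖w‖) ≤ ‖u - w‖ ^ 2 / (2 * (ℓ * γ)) + ζ ^ 2 * ℓ * γ / 2 * ‖w‖ ^ 2 := by
    have h : ‖u - w‖ ^ 2 / (2 * (ℓ * γ)) + ζ ^ 2 * ℓ * γ / 2 * ‖w‖ ^ 2 - ζ * (‖u - w‖ * ‖w‖)
        = (‖u - w‖ - ζ * (ℓ * γ) * ‖w‖) ^ 2 / (2 * (ℓ * γ)) := by
      field_simp
      ring
    have : 0 ≤ (‖u - w‖ - ζ * (ℓ * γ) * ‖w‖) ^ 2 / (2 * (ℓ * γ)) := by positivity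
    linarith
  have h5 : ‖u - w‖ ^ 2 / (2 * (ℓ * γ)) ≤ α ^ 2 * ℓ * (D : ℝ) ^ 3 / (4 * γ) + ℓ / γ * a ^ 2 := by
    calc _ ≤ ℓ ^ 2 * (α ^ 2 * (D : ℝ) ^ 3 / 2 + 2 * a ^ 2) / (2 * (ℓ * γ)) := by gcongr
      _ = _ := by field_simp; ring
  have h6 := mul_le_mul_of_nonneg_left h2 hζ.le
  rw [h1]
  linarith
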